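/- Let λ ∈ ℝ. The function F_λ(x) = ψ'(x) − λ(4 + 8x + 5x²)/(24x(1+x)³(2+x)²) − (24 + 120x + 283x² + 399x³ + 345x⁴ + 181x⁵ + 51x⁶ + 6x⁷)/(6x²(1+x)⁴(2+x)²) is completely monotonic on (0,∞) if and only if λ ≤ 0. -/

import Mathlib

/-- The digamma function `ψ(x) = Γ'(x)/Γ(x)`. -/
noncomputable def digamma (x : ℝ) : ℝ := deriv Real.Gamma x / Real.Gamma x

/-- A function is completely monotonic on a set `s` if it has derivatives of all
orders there and `(-1)^n f^(n)(x) ≥ 0` for all `x ∈ s` and all `n ≥ 0`. -/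
def CompletelyMonotonicOn (f : ℝ → ℝ) (s : Set ℝ) : Prop :=
  ContDiffOn ℝ (⊤ : ℕ∞) f s ∧
    ∀ n : ℕ, ∀ x ∈ s, 0 ≤ (-1 : ℝ) ^ n * iteratedDerivWithin n f s x

/-!
Write `R` for the large rational function of the statement, `L` for the one multiplied by `λ`, and
`D x = x⁻² - (R x - R (x + 1))`. Since `ψ' x = ∑ (x + k)⁻²` and `R` vanishes at infinity,
telescoping gives `ψ' x - R x = ∑ D (x + k)`. Here `D` is a combination with nonnegative
coefficients of products of powers of `(x + 1)⁻¹`, `(x + 2)⁻¹`, `(x + 3)⁻¹` and of the Laplace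
transform of a positive quadratic, so it is completely monotonic. Convergent sums of completely
monotonic functions are completely monotonic, hence so is `ψ' - R`; so is `-λ L` when `λ ≤ 0`, since
`L` is a combination of products of inverses as well. Conversely, `ψ' - R` stays bounded near `0`,
whereas `x * L x → 1 / 24` as `x → 0`, so nonnegativity of `ψ' - R - λ L` near `0` forces `λ ≤ 0`.
-/

open Filter Set Topology

namespace CompletelyMonotonicOn

variable {f g : ℝ → ℝ} {s : Set ℝ}

theorem nonneg (hf : CompletelyMonotonicOn f s) {x : ℝ} (hx : x ∈ s) : 0 ≤ f x := by
  simpa using hf.2 0 x hx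

theorem hasDerivAt (hf : CompletelyMonotonicOn f s) (hs : IsOpen s) {x : ℝ} (hx : x ∈ s) :
    HasDerivAt f (deriv f x) x :=
  ((hf.1.differentiableOn (by simp)).differentiableAt (hs.mem_nhds hx)).hasDerivAt

theorem neg_deriv (hf : CompletelyMonotonicOn f s) (hs : IsOpen s) :
    CompletelyMonotonicOn (-deriv f) s := by
  refine ⟨((contDiffOn_infty_iff_deriv_of_isOpen hs).1 hf.1).2.neg, fun n x hx => ?_⟩
  have hderiv : EqOn (derivWithin f s) (deriv f) s := fun y hy => derivWithin_of_isOpen hs hy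
  have hsucc := hf.2 (n + 1) x hx
  rw [iteratedDerivWithin_succ', iteratedDerivWithin_congr hderiv hx, pow_succ] at hsucc
  rw [iteratedDerivWithin_neg]
  linarith

/-- Coinduction: it suffices to exhibit a class of nonnegative functions that is closed under
`f ↦ -f'`. -/
theorem of_forall_exists_hasDerivAt_neg (hs : IsOpen s) (P : (ℝ → ℝ) → Prop)
    (hP_nonneg : ∀ f, P f → ∀ x ∈ s, 0 ≤ f x)
    (hP_deriv : ∀ f, P f → ∃ g, P g ∧ ∀ x ∈ s, HasDerivAt f (-g x) x) (hf : P f) :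
    CompletelyMonotonicOn f s := by
  refine ⟨contDiffOn_infty.2 fun n => ?_, fun n x hx => ?_⟩
  · induction n generalizing f with
    | zero =>
      obtain ⟨g, -, hfg⟩ := hP_deriv f hf
      exact contDiffOn_zero.2 fun x hx => (hfg x hx).continuousAt.continuousWithinAt
    | succ n ih =>
      obtain ⟨g, hg, hfg⟩ := hP_deriv f hf
      rw [Nat.cast_succ, contDiffOn_succ_iff_deriv_of_isOpen hs]
      exact ⟨fun x hx => (hfg x hx).differentiableAt.differentiableWithinAt, by simp,
        (ih hg).neg.congr fun x hx => (hfg x hx).deriv⟩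
  · induction n generalizing f with
    | zero => simpa using hP_nonneg f hf x hx
    | succ n ih =>
      obtain ⟨g, hg, hfg⟩ := hP_deriv f hf
      have hderiv : EqOn (derivWithin f s) (-g) s := fun y hy => by
        rw [derivWithin_of_isOpen hs hy, (hfg y hy).deriv, Pi.neg_apply]
      rw [iteratedDerivWithin_succ', iteratedDerivWithin_congr hderiv hx, iteratedDerivWithin_neg,
        pow_succ]
      linarith [ih hg]

theorem congr (hf : CompletelyMonotonicOn f s) (h : EqOn g f s) : CompletelyMonotonicOn g s :=
  ⟨hf.1.congr h, fun n x hx => iteratedDerivWithin_congr h hx ▸ hf.2 n x hx⟩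

theorem const {c : ℝ} (hc : 0 ≤ c) : CompletelyMonotonicOn (fun _ => c) s := by
  refine ⟨contDiffOn_const, fun n x _ => ?_⟩
  rw [iteratedDerivWithin_const]
  split_ifs with hn
  · simpa [hn] using hc
  · simp

theorem add (hf : CompletelyMonotonicOn f s) (hg : CompletelyMonotonicOn g s)
    (hs : UniqueDiffOn ℝ s) : CompletelyMonotonicOn (fun x => f x + g x) s := by
  refine ⟨hf.1.add hg.1, fun n x hx => ?_⟩
  rw [iteratedDerivWithin_fun_add hx hs ((hf.1 x hx).of_le (mod_cast le_top))
    ((hg.1 x hx).of_le (mod_cast le_top)), mul_add]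
  exact add_nonneg (hf.2 n x hx) (hg.2 n x hx)

theorem mul (hf : CompletelyMonotonicOn f s) (hg : CompletelyMonotonicOn g s)
    (hs : UniqueDiffOn ℝ s) : CompletelyMonotonicOn (fun x => f x * g x) s := by
  refine ⟨hf.1.mul hg.1, fun n x hx => ?_⟩
  have leibniz := iteratedDerivWithin_mul hx hs (n := n)
    ((hf.1 x hx).of_le (mod_cast le_top)) ((hg.1 x hx).of_le (mod_cast le_top))
  rw [show (fun x => f x * g x) = f * g from rfl, leibniz, Finset.mul_sum]
  refine Finset.sum_nonneg fun i hi => ?_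
  have hsign : (-1 : ℝ) ^ n = (-1) ^ i * (-1) ^ (n - i) := by
    rw [← pow_add, Nat.add_sub_cancel' (Finset.mem_range_succ_iff.1 hi)]
  calc
    0 ≤ n.choose i * ((-1) ^ i * iteratedDerivWithin i f s x) *
        ((-1) ^ (n - i) * iteratedDerivWithin (n - i) g s x) :=
      mul_nonneg (mul_nonneg (Nat.cast_nonneg _) (hf.2 i x hx)) (hg.2 (n - i) x hx)
    _ = _ := by rw [hsign]; ring

theorem const_mul {c : ℝ} (hc : 0 ≤ c) (hf : CompletelyMonotonicOn f s) :
    CompletelyMonotonicOn (fun x => c * f x) s := by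
  refine ⟨contDiffOn_const.mul hf.1, fun n x hx => ?_⟩
  rw [iteratedDerivWithin_const_mul_field, mul_left_comm]
  exact mul_nonneg hc (hf.2 n x hx)

theorem pow (hf : CompletelyMonotonicOn f s) (hs : UniqueDiffOn ℝ s) (n : ℕ) :
    CompletelyMonotonicOn (fun x => f x ^ n) s := by
  induction n with
  | zero => simpa using const zero_le_one
  | succ n ih => simpa only [pow_succ] using ih.mul hf hs

theorem comp_add_const (hf : CompletelyMonotonicOn f (Ioi 0)) {a : ℝ} (ha : 0 ≤ a) :
    CompletelyMonotonicOn (fun x => f (x + a)) (Ioi 0) := by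
  refine of_forall_exists_hasDerivAt_neg isOpen_Ioi
    (fun F => ∃ f, CompletelyMonotonicOn f (Ioi 0) ∧ F = fun x => f (x + a)) ?_ ?_ ⟨f, hf, rfl⟩
  · rintro _ ⟨f, hf, rfl⟩ x hx
    exact hf.nonneg (add_pos_of_pos_of_nonneg hx ha)
  · rintro _ ⟨f, hf, rfl⟩
    refine ⟨_, ⟨_, hf.neg_deriv isOpen_Ioi, rfl⟩, fun x hx => ?_⟩
    have hderiv := hf.hasDerivAt isOpen_Ioi (x := x + a) (add_pos_of_pos_of_nonneg hx ha)
    simpa using hderiv.comp_add_const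

theorem antitoneOn (hf : CompletelyMonotonicOn f s) (hs : IsOpen s) (hconvex : Convex ℝ s) :
    AntitoneOn f s := by
  refine antitoneOn_of_deriv_nonpos hconvex hf.1.continuousOn
    ((hf.1.differentiableOn (by simp)).mono interior_subset) fun x hx => ?_
  simpa using (hf.neg_deriv hs).nonneg (interior_subset hx)

theorem abs_deriv_le (hf : CompletelyMonotonicOn f (Ioi 0)) {a x : ℝ} (ha : 0 < a) (hax : a < x) :
    |deriv f x| ≤ f a / (x - a) := by
  have hx : 0 < x := ha.trans hax
  obtain ⟨ξ, ⟨haξ, hξx⟩, hξ⟩ := exists_deriv_eq_slope f hax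
    (hf.1.continuousOn.mono fun y hy => ha.trans_le hy.1)
    ((hf.1.differentiableOn (by simp)).mono fun y hy => ha.trans hy.1)
  have hneg := hf.neg_deriv isOpen_Ioi
  calc
    |deriv f x| = -deriv f x := abs_of_nonpos (neg_nonneg.1 (hneg.nonneg hx))
    _ ≤ -deriv f ξ :=
      hneg.antitoneOn isOpen_Ioi (convex_Ioi 0) (ha.trans haξ) hx hξx.le
    _ = (f a - f x) / (x - a) := by rw [hξ]; ring
    _ ≤ f a / (x - a) :=
      div_le_div_of_nonneg_right (sub_le_self _ (hf.nonneg hx)) (sub_pos.2 hax).le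

end CompletelyMonotonicOn

theorem hasDerivAt_of_hasSum {ι : Type*} {f f' : ι → ℝ → ℝ} {F : ℝ → ℝ} {u : ι → ℝ} {t : Set ℝ}
    {x : ℝ} (hu : Summable u) (ht : IsOpen t) (ht' : IsPreconnected t)
    (hf : ∀ i, ∀ y ∈ t, HasDerivAt (f i) (f' i y) y) (hf' : ∀ i, ∀ y ∈ t, ‖f' i y‖ ≤ u i)
    (hF : ∀ y ∈ t, HasSum (fun i => f i y) (F y)) (hx : x ∈ t) :
    HasDerivAt F (∑' i, f' i x) x := by
  refine (hasDerivAt_tsum_of_isPreconnected hu ht ht' hf hf' hx (hF x hx).summable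
    hx).congr_of_eventuallyEq ?_
  filter_upwards [ht.mem_nhds hx] with y hy using (hF y hy).tsum_eq.symm

namespace CompletelyMonotonicOn

theorem of_hasSum {ι : Type*} {f : ι → ℝ → ℝ} {F : ℝ → ℝ}
    (hf : ∀ i, CompletelyMonotonicOn (f i) (Ioi 0))
    (hF : ∀ x ∈ Ioi 0, HasSum (fun i => f i x) (F x)) : CompletelyMonotonicOn F (Ioi 0) := by
  refine of_forall_exists_hasDerivAt_neg isOpen_Ioi
    (fun F => ∃ f : ι → ℝ → ℝ, (∀ i, CompletelyMonotonicOn (f i) (Ioi 0)) ∧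
      ∀ x ∈ Ioi 0, HasSum (fun i => f i x) (F x)) ?_ ?_ ⟨f, hf, hF⟩
  · rintro F ⟨f, hf, hF⟩ x hx
    exact (hF x hx).nonneg fun i => (hf i).nonneg hx
  rintro F ⟨f, hf, hF⟩
  have hbound {x : ℝ} (hx : 0 < x) (i : ι) {y : ℝ} (hy : x ≤ y) :
      ‖deriv (f i) y‖ ≤ f i (x / 2) / (x / 2) := by
    refine ((hf i).abs_deriv_le (half_pos hx) ((half_lt_self hx).trans_le hy)).trans ?_
    gcongr
    · exact (hf i).nonneg (half_pos hx)
    · linarith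
  have hsummable {x : ℝ} (hx : 0 < x) : Summable fun i => f i (x / 2) / (x / 2) :=
    (hF (x / 2) (half_pos hx)).summable.div_const _
  refine ⟨fun x => ∑' i, -deriv (f i) x, ⟨fun i => -deriv (f i),
    fun i => (hf i).neg_deriv isOpen_Ioi, fun x hx => ?_⟩, fun x hx => ?_⟩
  · exact ((hsummable hx).of_norm_bounded fun i => hbound hx i le_rfl).neg.hasSum
  · simp only [tsum_neg, neg_neg]
    have hx2 : 0 < x / 2 := half_pos hx
    exact hasDerivAt_of_hasSum (hsummable hx2) isOpen_Ioi isPreconnected_Ioi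
      (fun i y hy => (hf i).hasDerivAt isOpen_Ioi (hx2.trans hy))
      (fun i y hy => hbound hx2 i (le_of_lt hy)) (fun y hy => hF y (hx2.trans hy))
      (mem_Ioi.2 (half_lt_self hx))

end CompletelyMonotonicOn

/-- This is the Laplace transform of `t ↦ a * t ^ 2 + b * t + c`, which is nonnegative. Up to sign
and a positive factor, its `n`-th derivative at `x` is the value of that quadratic at `(n + 1) / x`
plus a nonnegative term. -/
theorem completelyMonotonicOn_inv_cubic_of_discrim_nonpos {a b c : ℝ} (ha : 0 ≤ a) (hc : 0 ≤ c)
    (hdiscrim : discrim a b c ≤ 0) :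
    CompletelyMonotonicOn (fun x => 2 * a * x⁻¹ ^ 3 + b * x⁻¹ ^ 2 + c * x⁻¹) (Ioi 0) := by
  have hquadratic (t : ℝ) : 0 ≤ a * t ^ 2 + b * t + c := by
    rw [discrim] at hdiscrim
    rcases ha.eq_or_lt with rfl | ha
    · have hb : b = 0 := by nlinarith
      simpa [hb] using hc
    · nlinarith [sq_nonneg (2 * a * t + b)]
  let F (n : ℕ) (x : ℝ) : ℝ := n.factorial * (a * (n + 1) * (n + 2) * x⁻¹ ^ (n + 3) +
    b * (n + 1) * x⁻¹ ^ (n + 2) + c * x⁻¹ ^ (n + 1))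
  refine CompletelyMonotonicOn.of_forall_exists_hasDerivAt_neg isOpen_Ioi
    (fun f => ∃ n, f = F n) ?_ ?_ ⟨0, ?_⟩
  · rintro _ ⟨n, rfl⟩ x (hx : 0 < x)
    have hF : F n x = n.factorial * x⁻¹ ^ (n + 1) * ((a * ((n + 1) * x⁻¹) ^ 2 +
        b * ((n + 1) * x⁻¹) + c) + a * (n + 1) * x⁻¹ ^ 2) := by
      simp only [F]
      ring
    rw [hF]
    have := hquadratic ((n + 1) * x⁻¹)
    positivity
  · rintro _ ⟨n, rfl⟩
    refine ⟨F (n + 1), ⟨n + 1, rfl⟩, fun x (hx : 0 < x) => ?_⟩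
    have hpow (m : ℕ) := (hasDerivAt_inv hx.ne').pow (m + 1)
    refine (((((hpow (n + 2)).const_mul (a * (n + 1) * (n + 2))).add
      ((hpow (n + 1)).const_mul (b * (n + 1)))).add ((hpow n).const_mul c)).const_mul
      (n.factorial : ℝ)).congr_deriv ?_
    simp only [F, Nat.factorial_succ, Nat.add_sub_cancel]
    push_cast
    ring
  · ext x
    simp only [F, Nat.factorial_zero, Nat.cast_zero, Nat.cast_one]
    ring

theorem completelyMonotonicOn_inv : CompletelyMonotonicOn (fun x => x⁻¹) (Ioi 0) := by
  simpa using completelyMonotonicOn_inv_cubic_of_discrim_nonpos le_rfl zero_le_one (b := 0)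
    (by simp [discrim])

theorem completelyMonotonicOn_inv_add_pow {a : ℝ} (ha : 0 ≤ a) (n : ℕ) :
    CompletelyMonotonicOn (fun x => (x + a)⁻¹ ^ n) (Ioi 0) :=
  (completelyMonotonicOn_inv.comp_add_const ha).pow isOpen_Ioi.uniqueDiffOn n

section Digamma

theorem differentiableAt_log_Gamma {x : ℝ} (hx : 0 < x) :
    DifferentiableAt ℝ (Real.log ∘ Real.Gamma) x :=
  (Real.differentiableOn_Gamma_Ioi.differentiableAt (Ioi_mem_nhds hx)).log
    (Real.Gamma_pos_of_pos hx).ne'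

theorem digamma_eq_deriv_log_Gamma {x : ℝ} (hx : 0 < x) :
    digamma x = deriv (Real.log ∘ Real.Gamma) x :=
  (deriv.log (Real.differentiableOn_Gamma_Ioi.differentiableAt (Ioi_mem_nhds hx))
    (Real.Gamma_pos_of_pos hx).ne').symm

theorem log_Gamma_add_one {x : ℝ} (hx : 0 < x) :
    Real.log (Real.Gamma (x + 1)) = Real.log (Real.Gamma x) + Real.log x := by
  rw [Real.Gamma_add_one hx.ne', Real.log_mul hx.ne' (Real.Gamma_pos_of_pos hx).ne', add_comm]

theorem slope_log_Gamma_add_one {x : ℝ} (hx : 0 < x) :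
    slope (Real.log ∘ Real.Gamma) x (x + 1) = Real.log x := by
  simp [slope_def_field, log_Gamma_add_one hx]

theorem digamma_add_one {x : ℝ} (hx : 0 < x) : digamma (x + 1) = digamma x + x⁻¹ := by
  rw [digamma_eq_deriv_log_Gamma hx, digamma_eq_deriv_log_Gamma (by positivity),
    ← deriv_comp_add_const, ← Real.deriv_log,
    ← deriv_add (differentiableAt_log_Gamma hx) (Real.differentiableAt_log hx.ne')]
  apply EventuallyEq.deriv_eq
  filter_upwards [eventually_gt_nhds hx] with y hy using log_Gamma_add_one hy

theorem digamma_le_log {x : ℝ} (hx : 0 < x) : digamma x ≤ Real.log x := by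
  rw [digamma_eq_deriv_log_Gamma hx, ← slope_log_Gamma_add_one hx]
  exact Real.convexOn_log_Gamma.deriv_le_slope hx (add_pos hx one_pos) (lt_add_one x)
    (differentiableAt_log_Gamma hx)

theorem log_le_digamma_add_one {x : ℝ} (hx : 0 < x) : Real.log x ≤ digamma (x + 1) := by
  have hx1 : 0 < x + 1 := by positivity
  rw [digamma_eq_deriv_log_Gamma hx1, ← slope_log_Gamma_add_one hx]
  exact Real.convexOn_log_Gamma.slope_le_deriv hx hx1 (lt_add_one x)
    (differentiableAt_log_Gamma hx1)

theorem tendsto_digamma_sub_log : Tendsto (fun x => digamma x - Real.log x) atTop (𝓝 0) := by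
  refine tendsto_of_tendsto_of_tendsto_of_le_of_le' (g := fun x => -x⁻¹)
    (by simpa using (tendsto_inv_atTop_zero (𝕜 := ℝ)).neg) tendsto_const_nhds ?_ ?_
  · filter_upwards [eventually_gt_atTop 0] with x hx
    linarith [digamma_add_one hx, log_le_digamma_add_one hx]
  · filter_upwards [eventually_gt_atTop 0] with x hx using sub_nonpos.2 (digamma_le_log hx)

theorem tendsto_const_add_natCast_atTop (x : ℝ) : Tendsto (fun n : ℕ => x + n) atTop atTop :=
  tendsto_atTop_add_const_left _ _ tendsto_natCast_atTop_atTop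

theorem tendsto_digamma_add_natCast_sub (x y : ℝ) :
    Tendsto (fun n : ℕ => digamma (x + n) - digamma (y + n)) atTop (𝓝 0) := by
  have digamma_sub_log (z : ℝ) :
      Tendsto (fun n : ℕ => digamma (z + n) - Real.log n) atTop (𝓝 0) := by
    have hlog := (Real.tendsto_log_comp_add_sub_log z).comp tendsto_natCast_atTop_atTop (α := ℕ)
    simpa [Function.comp_def, add_comm] using
      (tendsto_digamma_sub_log.comp (tendsto_const_add_natCast_atTop z)).add hlog
  simpa using (digamma_sub_log x).sub (digamma_sub_log y)

theorem digamma_add_natCast {x : ℝ} (hx : 0 < x) (n : ℕ) :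
    digamma (x + n) = digamma x + ∑ k ∈ Finset.range n, (x + k)⁻¹ := by
  induction n with
  | zero => simp
  | succ n ih =>
    rw [Finset.sum_range_succ, ← add_assoc, ← ih, ← digamma_add_one (by positivity),
      Nat.cast_succ, add_assoc]

theorem hasSum_digamma_sub_digamma {x y : ℝ} (hx : 0 < x) (hxy : x ≤ y) :
    HasSum (fun k : ℕ => (x + k)⁻¹ - (y + k)⁻¹) (digamma y - digamma x) := by
  rw [hasSum_iff_tendsto_nat_of_nonneg fun k => sub_nonneg.2 (by gcongr)]
  have hlim := (tendsto_digamma_add_natCast_sub x y).const_add (digamma y - digamma x)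
  rw [add_zero] at hlim
  refine hlim.congr fun n => ?_
  rw [Finset.sum_sub_distrib, digamma_add_natCast hx, digamma_add_natCast (hx.trans_le hxy)]
  ring

theorem summable_inv_add_natCast_sq {x : ℝ} (hx : 0 < x) :
    Summable fun k : ℕ => (x + k)⁻¹ ^ 2 := by
  refine ((Real.summable_one_div_nat_add_rpow x 2).2 one_lt_two).congr fun k => ?_
  have hk : 0 < (k : ℝ) + x := by positivity
  rw [Real.rpow_ofNat, abs_of_pos hk, one_div, inv_pow, add_comm]

theorem hasSum_deriv_digamma {x : ℝ} (hx : 0 < x) :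
    HasSum (fun k : ℕ => (x + k)⁻¹ ^ 2) (deriv digamma x) := by
  have hx2 : 0 < x / 2 := half_pos hx
  have hderiv : HasDerivAt (fun y => digamma y - digamma (x / 2)) (∑' k : ℕ, (x + k)⁻¹ ^ 2) x := by
    refine hasDerivAt_of_hasSum (f' := fun (k : ℕ) y => (y + k)⁻¹ ^ 2)
      (summable_inv_add_natCast_sq hx2) isOpen_Ioi isPreconnected_Ioi
      (fun k y (hy : x / 2 < y) => ?_) (fun k y (hy : x / 2 < y) => ?_)
      (fun y hy => hasSum_digamma_sub_digamma hx2 (le_of_lt hy)) (half_lt_self hx)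
    · have hyk : y + k ≠ 0 := (add_pos_of_pos_of_nonneg (hx2.trans hy) k.cast_nonneg).ne'
      simpa using ((hasDerivAt_inv hyk).comp_add_const).const_sub ((x / 2 + k)⁻¹)
    · have hy0 : 0 < y := hx2.trans hy
      rw [Real.norm_of_nonneg (by positivity)]
      gcongr
  have hdigamma := (hderiv.add_const (digamma (x / 2))).deriv
  simp only [sub_add_cancel] at hdigamma
  rw [hdigamma]
  exact (summable_inv_add_natCast_sq hx).hasSum

end Digamma

section Trigamma

/-- The rational approximation of the trigamma function `ψ'` from below that is subtracted in the
theorem. -/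
noncomputable def trigammaMinorant (x : ℝ) : ℝ :=
  (24 + 120 * x + 283 * x ^ 2 + 399 * x ^ 3 + 345 * x ^ 4 + 181 * x ^ 5 + 51 * x ^ 6 + 6 * x ^ 7) /
    (6 * x ^ 2 * (1 + x) ^ 4 * (2 + x) ^ 2)

/-- The amount by which `trigammaMinorant` misses the functional equation `ψ'(x) - ψ'(x + 1) = x⁻²`
of the trigamma function. It is arranged so that `-9`, the only negative coefficient, is absorbed by
its two neighbours. -/
noncomputable def trigammaMinorantDefect (x : ℝ) : ℝ :=
  1 / 6 * (((12 * (x + 1)⁻¹ ^ 4 + (12 * (x + 1)⁻¹ ^ 3 + -9 * (x + 1)⁻¹ ^ 2 + 8 * (x + 1)⁻¹) + 14) *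
    (x + 2)⁻¹ + 20) * ((x + 2)⁻¹ ^ 3 * (x + 3)⁻¹ ^ 2))

/-- The rational function whose coefficient is the parameter `λ` of the theorem. -/
noncomputable def trigammaCorrection (x : ℝ) : ℝ :=
  (4 + 8 * x + 5 * x ^ 2) / (24 * x * (1 + x) ^ 3 * (2 + x) ^ 2)

theorem inv_sq_sub_trigammaMinorant_sub {x : ℝ} (hx : 0 < x) :
    x⁻¹ ^ 2 - (trigammaMinorant x - trigammaMinorant (x + 1)) = trigammaMinorantDefect x := by
  have h₁ : x + 1 ≠ 0 := by positivity
  have h₂ : x + 2 ≠ 0 := by positivity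
  have h₃ : x + 3 ≠ 0 := by positivity
  rw [trigammaMinorant, trigammaMinorant, trigammaMinorantDefect, add_comm 1 x, add_comm 2 x,
    show 1 + (x + 1) = x + 2 by ring, show 2 + (x + 1) = x + 3 by ring]
  field_simp
  ring

theorem trigammaMinorant_le {x : ℝ} (hx : 0 < x) : trigammaMinorant x ≤ x⁻¹ + x⁻¹ ^ 2 := by
  have hdiff : x⁻¹ + x⁻¹ ^ 2 - trigammaMinorant x =
      (24 * x + 83 * x ^ 2 + 111 * x ^ 3 + 75 * x ^ 4 + 23 * x ^ 5 + 3 * x ^ 6) /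
        (6 * x ^ 2 * (1 + x) ^ 4 * (2 + x) ^ 2) := by
    rw [trigammaMinorant]
    field_simp
    ring
  rw [← sub_nonneg, hdiff]
  positivity

theorem tendsto_trigammaMinorant_atTop : Tendsto trigammaMinorant atTop (𝓝 0) := by
  have hinv : Tendsto (fun x : ℝ => x⁻¹) atTop (𝓝 0) := tendsto_inv_atTop_zero
  refine tendsto_of_tendsto_of_tendsto_of_le_of_le' (h := fun x => x⁻¹ + x⁻¹ ^ 2)
    tendsto_const_nhds (by simpa using hinv.add (hinv.pow 2)) ?_ ?_
  · filter_upwards [eventually_gt_atTop 0] with x hx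
    rw [trigammaMinorant]
    positivity
  · filter_upwards [eventually_gt_atTop 0] with x hx using trigammaMinorant_le hx

theorem completelyMonotonicOn_trigammaMinorantDefect :
    CompletelyMonotonicOn trigammaMinorantDefect (Ioi 0) := by
  have hs : UniqueDiffOn ℝ (Ioi (0 : ℝ)) := isOpen_Ioi.uniqueDiffOn
  have hcubic := (completelyMonotonicOn_inv_cubic_of_discrim_nonpos (a := 6) (b := -9) (c := 8)
    (by norm_num) (by norm_num) (by norm_num [discrim])).comp_add_const zero_le_one
  have hfactor := (((((completelyMonotonicOn_inv_add_pow zero_le_one 4).const_mul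
    (by norm_num : (0 : ℝ) ≤ 12)).add hcubic hs).add (.const (by norm_num : (0 : ℝ) ≤ 14))
      hs).mul (completelyMonotonicOn_inv_add_pow zero_le_two 1) hs).add
        (.const (by norm_num : (0 : ℝ) ≤ 20)) hs
  refine ((hfactor.mul ((completelyMonotonicOn_inv_add_pow zero_le_two 3).mul
    (completelyMonotonicOn_inv_add_pow zero_le_three 2) hs) hs).const_mul
      (by norm_num : (0 : ℝ) ≤ 1 / 6)).congr fun x _ => ?_
  rw [trigammaMinorantDefect]
  ring

theorem completelyMonotonicOn_trigammaCorrection :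
    CompletelyMonotonicOn trigammaCorrection (Ioi 0) := by
  have hs : UniqueDiffOn ℝ (Ioi (0 : ℝ)) := isOpen_Ioi.uniqueDiffOn
  have hinv := completelyMonotonicOn_inv_add_pow zero_le_one
  refine ((((((completelyMonotonicOn_inv.mul (hinv 3) hs).const_mul zero_le_four).add
    ((hinv 3).const_mul zero_le_three) hs).add ((hinv 2).const_mul (by norm_num : (0 : ℝ) ≤ 5))
      hs).mul (completelyMonotonicOn_inv_add_pow zero_le_two 2) hs).const_mul
        (by norm_num : (0 : ℝ) ≤ 1 / 24)).congr fun x (hx : 0 < x) => ?_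
  have h₁ : x + 1 ≠ 0 := by positivity
  have h₂ : x + 2 ≠ 0 := by positivity
  rw [trigammaCorrection, add_comm 1 x, add_comm 2 x]
  field_simp
  ring

theorem hasSum_trigammaMinorantDefect {x : ℝ} (hx : 0 < x) :
    HasSum (fun k : ℕ => trigammaMinorantDefect (x + k))
      (deriv digamma x - trigammaMinorant x) := by
  rw [hasSum_iff_tendsto_nat_of_nonneg fun k =>
    completelyMonotonicOn_trigammaMinorantDefect.nonneg (mem_Ioi.2 (by positivity))]
  have hremainder := tendsto_trigammaMinorant_atTop.comp (tendsto_const_add_natCast_atTop x)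
  have hlim := (hasSum_deriv_digamma hx).tendsto_sum_nat.sub
    (hremainder.const_sub (trigammaMinorant x))
  rw [sub_zero] at hlim
  refine hlim.congr fun n => ?_
  have htelescope := Finset.sum_range_sub' (fun k : ℕ => trigammaMinorant (x + k)) n
  rw [Nat.cast_zero, add_zero] at htelescope
  rw [Function.comp_apply, ← htelescope, ← Finset.sum_sub_distrib]
  refine Finset.sum_congr rfl fun k _ => ?_
  rw [← inv_sq_sub_trigammaMinorant_sub (by positivity), Nat.cast_succ, add_assoc]

theorem completelyMonotonicOn_deriv_digamma_sub_trigammaMinorant :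
    CompletelyMonotonicOn (fun x => deriv digamma x - trigammaMinorant x) (Ioi 0) :=
  .of_hasSum
    (fun k : ℕ => completelyMonotonicOn_trigammaMinorantDefect.comp_add_const k.cast_nonneg)
    fun _ hx => hasSum_trigammaMinorantDefect hx

theorem deriv_digamma_sub_trigammaMinorant_le {x : ℝ} (hx : 0 < x) :
    deriv digamma x - trigammaMinorant x ≤
      trigammaMinorantDefect x + (deriv digamma 1 - trigammaMinorant 1) := by
  have hshift : HasSum (fun k : ℕ => trigammaMinorantDefect (x + (k + 1 : ℕ)))
      (deriv digamma (x + 1) - trigammaMinorant (x + 1)) := by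
    simpa only [Nat.cast_succ, add_right_comm x 1, ← add_assoc] using
      hasSum_trigammaMinorantDefect (add_pos hx one_pos)
  have hrec := (hasSum_trigammaMinorantDefect hx).unique hshift.zero_add
  have hanti := completelyMonotonicOn_deriv_digamma_sub_trigammaMinorant.antitoneOn isOpen_Ioi
    (convex_Ioi 0) (mem_Ioi.2 one_pos) (mem_Ioi.2 (add_pos hx one_pos)) (by linarith)
  rw [hrec, Nat.cast_zero, add_zero]
  exact add_le_add_right hanti _

theorem nonpos_of_forall_mul_trigammaCorrection_le {c : ℝ}
    (h : ∀ x > 0, c * trigammaCorrection x ≤ deriv digamma x - trigammaMinorant x) : c ≤ 0 := by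
  set C := deriv digamma 1 - trigammaMinorant 1
  have hle : ∀ x > 0, c * ((4 + 8 * x + 5 * x ^ 2) / (24 * (1 + x) ^ 3 * (2 + x) ^ 2)) ≤
      x * (trigammaMinorantDefect x + C) := fun x hx => calc
    _ = x * (c * trigammaCorrection x) := by
      rw [trigammaCorrection]
      field_simp
    _ ≤ _ := by
      gcongr
      exact (h x hx).trans (deriv_digamma_sub_trigammaMinorant_le hx)
  have hleft : ContinuousAt (fun x : ℝ =>
      c * ((4 + 8 * x + 5 * x ^ 2) / (24 * (1 + x) ^ 3 * (2 + x) ^ 2))) 0 := by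
    fun_prop (disch := norm_num)
  have hright : ContinuousAt (fun x : ℝ => x * (trigammaMinorantDefect x + C)) 0 := by
    unfold trigammaMinorantDefect
    fun_prop (disch := norm_num)
  have hlim := le_of_tendsto_of_tendsto (b := 𝓝[>] (0 : ℝ))
    (hleft.tendsto.mono_left nhdsWithin_le_nhds) (hright.tendsto.mono_left nhdsWithin_le_nhds)
    (eventually_mem_nhdsWithin.mono hle)
  have hvalue : c * (1 / 24) ≤ 0 := (le_of_eq_of_le (by norm_num) hlim).trans_eq (zero_mul _)
  exact nonpos_of_mul_nonpos_left hvalue (by norm_num)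

end Trigamma

theorem stmt_5 (lam : ℝ) :
    CompletelyMonotonicOn
      (fun x : ℝ => deriv digamma x -
        lam * (4 + 8 * x + 5 * x ^ 2) / (24 * x * (1 + x) ^ 3 * (2 + x) ^ 2) -
        (24 + 120 * x + 283 * x ^ 2 + 399 * x ^ 3 + 345 * x ^ 4 + 181 * x ^ 5 +
          51 * x ^ 6 + 6 * x ^ 7) / (6 * x ^ 2 * (1 + x) ^ 4 * (2 + x) ^ 2))
      (Set.Ioi 0) ↔ lam ≤ 0 := by
  simp only [mul_div_assoc lam]
  change CompletelyMonotonicOn (fun x => deriv digamma x - lam * trigammaCorrection x -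
    trigammaMinorant x) (Ioi 0) ↔ lam ≤ 0
  refine ⟨fun h => nonpos_of_forall_mul_trigammaCorrection_le fun x hx => ?_, fun hlam => ?_⟩
  · linarith [h.nonneg hx]
  · refine (completelyMonotonicOn_deriv_digamma_sub_trigammaMinorant.add
      (completelyMonotonicOn_trigammaCorrection.const_mul (neg_nonneg.2 hlam))
      isOpen_Ioi.uniqueDiffOn).congr fun x _ => ?_
    ring
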